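/- For every positive integer r there exists a constant C = C(r) such that the following holds. Let p be a prime, let χ be a non-trivial multiplicative character modulo p, let ℳ, 𝒩 ⊆ 𝔽_p be arbitrary subsets with cardinalities M and N respectively, and let (α_m)_{m ∈ ℳ} and (β_n)_{n ∈ 𝒩} be arbitrary complex numbers. Then |∑_{m ∈ ℳ} ∑_{n ∈ 𝒩} α_m·β_n·χ(m + n)| ≤ C · ‖α‖₁^{1 − 1/r} · ‖α‖₂^{1/r} · ‖β‖_∞ · (N·p^{1/(4r)} + N^{1/2}·p^{1/(2r)}), where ‖α‖₁ = ∑_{m ∈ ℳ} |α_m|, ‖α‖₂ = (∑_{m ∈ ℳ} |α_m|²)^{1/2}, and ‖β‖_∞ = max_{n ∈ 𝒩} |β_n|. -/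

import Mathlib

open Finset

/-!
Hölder's and Cauchy's inequalities separate `α` from the inner sums and leave the `2r`-th moment of
`x ↦ ∑ n, β n * χ (x + n)`. Expanding it gives one correlation sum of `χ` and `χ⁻¹` for each
`2r`-tuple of shifts. If every shift occurs at least twice, then there are at most `r` different
ones: such tuples are few and the trivial bound suffices. If some shift occurs exactly once, Weil's
bound saves a square root.

Weil's bound is proved following Stepanov. The sums `L k` of `χ (∏ i, g (w i) ^ e i)`, weighted by
the von Mangoldt function, over monic `g` of degree `k` are, up to sign, power sums of at most
`2r - 1` numbers because the `L`-function is a polynomial. Since the values of `χ` cancel, `L (2k)`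
is small if no value `z ≠ 0` of the product is taken too often. The roots of the primes at which `z`
is taken are zeros of an auxiliary polynomial of degree about `q ^ (2k) / (q - 1)`, whose
coefficients are chosen so that `θ ^ q ^ (2k) = θ` reduces its `q ^ k`-th power at `θ` to zero. This
bounds `L (2k)` by a constant times `q ^ k`, and by simultaneous Dirichlet approximation of their
arguments all the numbers have absolute value at most `√q`.
-/

section FunctionField

open Polynomial

section MonicSums

variable {F : Type*} [Field F] [Finite F]

theorem finite_setOf_isMonicOfDegree (F : Type*) [Field F] [Finite F] (n : ℕ) :
    {g : F[X] | IsMonicOfDegree g n}.Finite := by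
  have hfinite := Finite.of_equiv _
    ((monicEquivDegreeLT (R := F) n).trans (degreeLTEquiv F n).toEquiv).symm
  exact (Set.finite_coe_iff.1 hfinite).subset fun g hg => ⟨hg.monic, hg.natDegree_eq⟩

/-- The monic polynomials of degree `n` over a finite field. -/
noncomputable def monicOfDegree (F : Type*) [Field F] [Finite F] (n : ℕ) : Finset F[X] :=
  (finite_setOf_isMonicOfDegree F n).toFinset

theorem mem_monicOfDegree {n : ℕ} {g : F[X]} : g ∈ monicOfDegree F n ↔ IsMonicOfDegree g n := by
  simp [monicOfDegree]

theorem card_monicOfDegree (F : Type*) [Field F] [Finite F] (n : ℕ) :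
    #(monicOfDegree F n) = Nat.card F ^ n := by
  have e := (monicEquivDegreeLT (R := F) n).trans (degreeLTEquiv F n).toEquiv
  have hcard := Nat.card_congr e
  rw [Nat.card_fun, Nat.card_fin] at hcard
  rw [← hcard, ← Nat.card_eq_finsetCard]
  exact Nat.card_congr (Equiv.subtypeEquivRight fun g =>
    mem_monicOfDegree.trans ⟨fun h => ⟨h.monic, h.natDegree_eq⟩, fun h => ⟨h.2, h.1⟩⟩)

open scoped Classical in
/-- The monic irreducible polynomials over a finite field whose degree divides `n`, where `n ≠ 0`.
Their powers of degree `n` are the prime powers of degree `n` in `F[X]`. -/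
noncomputable def monicIrreducible (F : Type*) [Field F] [Finite F] (n : ℕ) : Finset F[X] :=
  {P ∈ n.divisors.biUnion (monicOfDegree F) | Irreducible P}

theorem mem_monicIrreducible {n : ℕ} {P : F[X]} :
    P ∈ monicIrreducible F n ↔ P.Monic ∧ Irreducible P ∧ P.natDegree ∣ n ∧ n ≠ 0 := by
  simp only [monicIrreducible, mem_filter, mem_biUnion, Nat.mem_divisors, mem_monicOfDegree]
  exact ⟨fun ⟨⟨_, hd, hP⟩, hirr⟩ => ⟨hP.monic, hirr, hP.natDegree_eq ▸ hd⟩,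
    fun ⟨hm, hirr, hd⟩ => ⟨⟨_, hd, rfl, hm⟩, hirr⟩⟩

theorem isMonicOfDegree_pow_div {n : ℕ} {P : F[X]} (hP : P ∈ monicIrreducible F n) :
    IsMonicOfDegree (P ^ (n / P.natDegree)) n := by
  obtain ⟨hm, -, hd, -⟩ := mem_monicIrreducible.1 hP
  exact ⟨by rw [hm.natDegree_pow, Nat.div_mul_cancel hd], hm.pow _⟩

theorem card_filter_dvd_and_div_le {n d c : ℕ} (hd : 0 < d) (h : d * c ≤ n) :
    #{j ∈ Icc 1 n | d ∣ j ∧ j / d ≤ c} = c := by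
  have himage : {j ∈ Icc 1 n | d ∣ j ∧ j / d ≤ c} = (Icc 1 c).image (d * ·) := by
    ext j
    simp only [mem_filter, mem_Icc, mem_image]
    constructor
    · rintro ⟨⟨hj, -⟩, ⟨k, rfl⟩, hk⟩
      rw [Nat.mul_div_cancel_left _ hd] at hk
      exact ⟨k, ⟨Nat.pos_of_mul_pos_left hj, hk⟩, rfl⟩
    · rintro ⟨k, ⟨hk, hkc⟩, rfl⟩
      rw [Nat.mul_div_cancel_left _ hd]
      exact ⟨⟨Nat.mul_pos hd hk, (Nat.mul_le_mul_left d hkc).trans h⟩, dvd_mul_right d k, hkc⟩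
  rw [himage, card_image_of_injective _ (mul_right_injective₀ hd.ne'), Nat.card_Icc,
    Nat.add_sub_cancel]

open UniqueFactorizationMonoid in
open scoped Classical in
theorem sum_natDegree_of_pow_dvd {n : ℕ} {g : F[X]} (hg : IsMonicOfDegree g n) :
    ∑ j ∈ Icc 1 n, ∑ P ∈ monicIrreducible F j with P ^ (j / P.natDegree) ∣ g, P.natDegree = n := by
  set S := normalizedFactors g
  have hmonic : ∀ P ∈ S, P.Monic := fun P hP => by
    rw [← normalize_normalized_factor P hP]
    exact monic_normalize (irreducible_of_normalized_factor P hP).ne_zero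
  have hprod : S.prod = g := by
    rw [prod_normalizedFactors_eq hg.ne_zero, hg.monic.normalize_eq_self]
  have hdegree : ∑ P ∈ S.toFinset, S.count P * P.natDegree = n := by
    rw [← hg.natDegree_eq, ← hprod, natDegree_multiset_prod_of_monic _ hmonic,
      sum_multiset_map_count]
    simp only [smul_eq_mul]
  have hdvd : ∀ P : F[X], P.Monic → Irreducible P → ∀ m, P ^ m ∣ g ↔ m ≤ S.count P :=
    fun P hP hirr m => by
      rw [pow_dvd_iff_le_emultiplicity, emultiplicity_eq_count_normalizedFactors hirr hg.ne_zero,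
        hP.normalize_eq_self, Nat.cast_le]
  rw [sum_comm' (t' := S.toFinset)
    (s' := fun P => {j ∈ Icc 1 n | P.natDegree ∣ j ∧ j / P.natDegree ≤ S.count P})]
  · refine Eq.trans (sum_congr rfl fun P hP => ?_) hdegree
    have hPS := Multiset.mem_toFinset.1 hP
    have hirr := irreducible_of_normalized_factor P hPS
    have hle := natDegree_le_of_dvd ((hdvd P (hmonic P hPS) hirr _).2 le_rfl) hg.ne_zero
    rw [(hmonic P hPS).natDegree_pow, hg.natDegree_eq, mul_comm] at hle
    rw [sum_const, card_filter_dvd_and_div_le hirr.natDegree_pos hle, smul_eq_mul]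
  · intro j P
    simp only [mem_filter, mem_monicIrreducible, Multiset.mem_toFinset, mem_Icc]
    constructor
    · rintro ⟨hj, ⟨hP, hirr, hd, -⟩, hPg⟩
      have hle := (hdvd P hP hirr _).1 hPg
      have hpos := Nat.div_pos (Nat.le_of_dvd hj.1 hd) hirr.natDegree_pos
      exact ⟨⟨hj, hd, hle⟩, Multiset.count_pos.1 (hpos.trans_le hle)⟩
    · rintro ⟨⟨hj, hd, hle⟩, hPS⟩
      have hirr := irreducible_of_normalized_factor P hPS
      exact ⟨hj, ⟨hmonic P hPS, hirr, hd, by lia⟩, (hdvd P (hmonic P hPS) hirr _).2 hle⟩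

variable {R : Type*}

/-- The coefficients of the L-series `∑ λ(g) T ^ deg g`, over monic `g`, of a multiplicative
function `λ` on `F[X]`. -/
noncomputable def monicSum [CommSemiring R] (lam : F[X] →* R) (n : ℕ) : R :=
  ∑ g ∈ monicOfDegree F n, lam g

/-- The coefficients of the logarithmic derivative of the L-series of `λ`: the sums of `Λ λ` over
the monic polynomials of degree `n`, where the von Mangoldt function `Λ` is `deg P` at the powers
of `P`. -/
noncomputable def vonMangoldtSum [CommSemiring R] (lam : F[X] →* R) (n : ℕ) : R :=
  ∑ P ∈ monicIrreducible F n, (P.natDegree : R) * lam P ^ (n / P.natDegree)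

/-- The relation `X A' = A L` between the generating series of `A` and `L` (whose constant term
does not matter), coefficient by coefficient. -/
def NewtonRecursion [CommSemiring R] (A L : ℕ → R) : Prop :=
  ∀ n : ℕ, (n : R) * A n = ∑ j ∈ Icc 1 n, A (n - j) * L j

theorem NewtonRecursion.unique [CommRing R] {A L L' : ℕ → R} (hL : NewtonRecursion A L)
    (hL' : NewtonRecursion A L') (hA : A 0 = 1) {n : ℕ} (hn : n ≠ 0) : L n = L' n := by
  induction n using Nat.strong_induction_on with
  | _ n ih =>
    obtain ⟨m, rfl⟩ := Nat.exists_eq_succ_of_ne_zero hn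
    have h := (hL (m + 1)).symm.trans (hL' (m + 1))
    rw [sum_Icc_succ_top (by lia), sum_Icc_succ_top (by lia), Nat.sub_self, hA, one_mul, one_mul,
      sum_congr rfl fun j hj => by rw [ih j (by grind) (by grind)]] at h
    exact add_left_cancel h

theorem monicSum_zero [CommSemiring R] (lam : F[X] →* R) : monicSum lam 0 = 1 := by
  have h : monicOfDegree F 0 = {1} := by
    ext g
    rw [mem_monicOfDegree, isMonicOfDegree_zero_iff, mem_singleton]
  rw [monicSum, h, sum_singleton, map_one]

open scoped Classical in
theorem sum_monicOfDegree_filter_dvd [CommSemiring R] (lam : F[X] →* R) {j n : ℕ} (hjn : j ≤ n)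
    {Q : F[X]} (hQ : IsMonicOfDegree Q j) :
    ∑ g ∈ monicOfDegree F n with Q ∣ g, lam g = lam Q * monicSum lam (n - j) := by
  rw [monicSum, mul_sum]
  symm
  refine sum_bij (fun h _ => Q * h) (fun h hh => ?_)
    (fun _ _ _ _ hab => mul_left_cancel₀ hQ.ne_zero hab) (fun g hg => ?_) fun h _ => by
      rw [map_mul]
  · rw [mem_filter, mem_monicOfDegree]
    rw [mem_monicOfDegree] at hh
    exact ⟨Nat.add_sub_cancel' hjn ▸ hQ.mul hh, dvd_mul_right Q h⟩
  · obtain ⟨hg, h, rfl⟩ := mem_filter.1 hg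
    rw [mem_monicOfDegree] at hg
    refine ⟨h, mem_monicOfDegree.2 (hQ.of_mul_left ?_), rfl⟩
    rwa [Nat.add_sub_cancel' hjn]

theorem newtonRecursion_monicSum [CommSemiring R] (lam : F[X] →* R) :
    NewtonRecursion (monicSum lam) (vonMangoldtSum lam) := by
  classical
  intro n
  calc (n : R) * monicSum lam n
      = ∑ g ∈ monicOfDegree F n, ∑ j ∈ Icc 1 n,
          ∑ P ∈ monicIrreducible F j with P ^ (j / P.natDegree) ∣ g,
            (P.natDegree : R) * lam g := by
        rw [monicSum, mul_sum]
        refine sum_congr rfl fun g hg => ?_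
        simp only [← sum_mul, ← Nat.cast_sum, sum_natDegree_of_pow_dvd (mem_monicOfDegree.1 hg)]
    _ = ∑ j ∈ Icc 1 n, ∑ P ∈ monicIrreducible F j,
          ∑ g ∈ monicOfDegree F n with P ^ (j / P.natDegree) ∣ g, (P.natDegree : R) * lam g := by
        rw [sum_comm]
        exact sum_congr rfl fun j _ => sum_comm' fun g P => by
          simp only [mem_filter]
          tauto
    _ = ∑ j ∈ Icc 1 n, monicSum lam (n - j) * vonMangoldtSum lam j := by
        refine sum_congr rfl fun j hj => ?_
        rw [vonMangoldtSum, mul_sum]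
        refine sum_congr rfl fun P hP => ?_
        rw [← mul_sum, sum_monicOfDegree_filter_dvd lam (mem_Icc.1 hj).2
          (isMonicOfDegree_pow_div hP), map_pow]
        ring

theorem vonMangoldtSum_one [CommRing R] {n : ℕ} (hn : n ≠ 0) :
    vonMangoldtSum (1 : F[X] →* R) n = (Nat.card F : R) ^ n := by
  refine (newtonRecursion_monicSum 1).unique (L' := fun n => (Nat.card F : R) ^ n) (fun m => ?_)
    (monicSum_zero 1) hn
  have hA : ∀ m, monicSum (1 : F[X] →* R) m = (Nat.card F : R) ^ m := fun m => by
    simp [monicSum, card_monicOfDegree]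
  simp only [hA]
  rw [sum_congr rfl fun j hj => by rw [← pow_add, Nat.sub_add_cancel (mem_Icc.1 hj).2]]
  simp

end MonicSums

section PowerSums

theorem newtonRecursion_esymm {σ R : Type*} [Fintype σ] [CommRing R] (w : σ → R) :
    NewtonRecursion (fun n => (-1) ^ n * (univ.val.map w).esymm n) (fun n => -∑ i, w i ^ n) := by
  classical
  intro n
  have hnewton := congrArg (MvPolynomial.aeval w) (MvPolynomial.mul_esymm_eq_sum σ R n)
  simp only [map_mul, map_natCast, map_pow, map_neg, map_one, map_sum, MvPolynomial.psum,
    MvPolynomial.aeval_X, MvPolynomial.aeval_esymm_eq_multiset_esymm] at hnewton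
  calc (n : R) * ((-1) ^ n * (univ.val.map w).esymm n)
      = ∑ a ∈ antidiagonal n with a.1 < n,
          (-1) ^ a.1 * (univ.val.map w).esymm a.1 * -∑ i, w i ^ a.2 := by
        rw [mul_left_comm, hnewton, ← mul_assoc, ← pow_add, Odd.neg_one_pow (by grind), neg_one_mul,
          ← sum_neg_distrib]
        simp only [mul_neg]
    _ = ∑ j ∈ Icc 1 n, (-1) ^ (n - j) * (univ.val.map w).esymm (n - j) * -∑ i, w i ^ j := by
        refine sum_nbij' Prod.snd (fun j => (n - j, j)) ?_ ?_ ?_ ?_ ?_ <;>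
          grind [HasAntidiagonal.mem_antidiagonal]

theorem exists_esymm_eq {K : Type*} [Field K] [IsAlgClosed K] {k : ℕ} {A : ℕ → K} (hA0 : A 0 = 1)
    (hA : ∀ n, k < n → A n = 0) :
    ∃ w : Fin k → K, ∀ n, A n = (-1) ^ n * (univ.val.map w).esymm n := by
  set B : K[X] := ∑ n ∈ range (k + 1), monomial (k - n) (A n)
  have hcoeff : ∀ n ≤ k, B.coeff (k - n) = A n := fun n hn => by
    simp only [B, finsetSum_coeff, coeff_monomial]
    rw [sum_eq_single_of_mem n (by grind) fun b hb hbn => if_neg (by grind), if_pos rfl]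
  have hdegree : B.natDegree ≤ k :=
    natDegree_sum_le_of_forall_le _ _ fun n _ => (natDegree_monomial_le _).trans (Nat.sub_le _ _)
  have hlead : B.coeff k = 1 := (hcoeff 0 (Nat.zero_le k)).trans hA0
  have hmonic : B.Monic := monic_of_natDegree_le_of_coeff_eq_one k hdegree hlead
  have hk : B.natDegree = k :=
    hdegree.antisymm (le_natDegree_of_ne_zero (hlead ▸ one_ne_zero))
  have hcard : B.roots.card = B.natDegree := splits_iff_card_roots.1 (IsAlgClosed.splits B)
  obtain ⟨l, hl⟩ := Quotient.exists_rep B.roots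
  obtain rfl : l.length = k := by rw [← hk, ← hcard, ← hl]; rfl
  refine ⟨l.get, fun n => ?_⟩
  rw [Fin.univ_val_map, List.ofFn_get]
  change A n = (-1) ^ n * Multiset.esymm ⟦l⟧ n
  rw [hl]
  rcases le_or_gt n l.length with hn | hn
  · have h := coeff_eq_esymm_roots_of_card hcard (k := l.length - n) (by lia)
    rwa [hcoeff n hn, hmonic.leadingCoeff, hk, Nat.sub_sub_self hn, one_mul] at h
  · rw [hA n hn, Multiset.esymm, Multiset.powersetCard_eq_empty n (by lia)]
    simp

theorem exists_eq_neg_sum_pow {K : Type*} [Field K] [IsAlgClosed K] {k : ℕ} {A L : ℕ → K}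
    (hAL : NewtonRecursion A L) (hA0 : A 0 = 1) (hA : ∀ n, k < n → A n = 0) :
    ∃ w : Fin k → K, ∀ n, n ≠ 0 → L n = -∑ i, w i ^ n := by
  obtain ⟨w, hw⟩ := exists_esymm_eq hA0 hA
  obtain rfl := funext hw
  exact ⟨w, fun n hn => hAL.unique (newtonRecursion_esymm w) hA0 hn⟩

open Filter Topology

-- Simultaneous Dirichlet approximation: some powers of the phases all come close to `1` at once.
theorem frequently_half_norm_pow_le_re {ι : Type*} [Finite ι] (z : ι → ℂ) :
    ∃ᶠ m : ℕ in atTop, ∀ i, ‖z i‖ ^ m / 2 ≤ (z i ^ m).re := by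
  have hphase : ∀ i, ∃ u : Circle, z i = ‖z i‖ * (u : ℂ) := fun i =>
    ⟨Circle.exp (z i).arg, by rw [Circle.coe_exp, Complex.norm_mul_exp_arg_mul_I]⟩
  choose u hu using hphase
  have hnhds : ∀ᶠ v : ι → Circle in 𝓝 1, ∀ i, 1 / 2 < (v i : ℂ).re := by
    refine eventually_all.2 fun i => ?_
    have hcont : Continuous fun v : ι → Circle => (v i : ℂ).re := by fun_prop
    exact hcont.continuousAt.eventually_const_lt (by norm_num)
  refine ((mapClusterPt_one_atTop_pow u).frequently hnhds).mono fun m hm i => ?_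
  calc ‖z i‖ ^ m / 2 ≤ ‖z i‖ ^ m * ((u ^ m) i : ℂ).re := by
        rw [div_eq_mul_one_div]
        exact mul_le_mul_of_nonneg_left (hm i).le (by positivity)
    _ = (z i ^ m).re := by
        conv_rhs => rw [hu i]
        rw [mul_pow, ← Complex.ofReal_pow, Complex.re_ofReal_mul, Pi.pow_apply, Circle.coe_pow]

theorem norm_le_of_norm_sum_pow_le {ι : Type*} [Fintype ι] {z : ι → ℂ} {ρ C : ℝ} (hρ : 0 ≤ ρ)
    (h : ∀ᶠ m : ℕ in atTop, ‖∑ i, z i ^ m‖ ≤ C * ρ ^ m) (i : ι) : ‖z i‖ ≤ ρ := by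
  by_contra! hlt
  have hsmall : ∀ᶠ m : ℕ in atTop, ‖C * ρ ^ m‖ ≤ 1 / 3 * ‖‖z i‖ ^ m‖ :=
    ((isLittleO_pow_pow_of_lt_left hρ hlt).const_mul_left C).bound (by norm_num)
  obtain ⟨m, ⟨hre, hsum⟩, hsmall⟩ :=
    (((frequently_half_norm_pow_le_re z).and_eventually h).and_eventually hsmall).exists
  have hle : ‖z i‖ ^ m / 2 ≤ C * ρ ^ m :=
    calc ‖z i‖ ^ m / 2 ≤ ∑ j, ‖z j‖ ^ m / 2 :=
          single_le_sum (f := fun j => ‖z j‖ ^ m / 2) (fun j _ => by positivity) (mem_univ i)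
      _ ≤ ∑ j, (z j ^ m).re := sum_le_sum fun j _ => hre j
      _ = (∑ j, z j ^ m).re := (Complex.re_sum _ _).symm
      _ ≤ ‖∑ j, z j ^ m‖ := Complex.re_le_norm _
      _ ≤ C * ρ ^ m := hsum
  have hpos : 0 < ‖z i‖ ^ m := pow_pos (hρ.trans_lt hlt) m
  rw [Real.norm_of_nonneg hpos.le] at hsmall
  linarith [Real.le_norm_self (C * ρ ^ m)]

theorem norm_le_mul_sqrt_of_newtonRecursion {k : ℕ} {A L : ℕ → ℂ} (hAL : NewtonRecursion A L)
    (hA0 : A 0 = 1) (hA : ∀ n, k < n → A n = 0) {q C : ℝ} (hq : 0 ≤ q)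
    (hL : ∀ᶠ m in atTop, ‖L (2 * m)‖ ≤ C * q ^ m) : ‖A 1‖ ≤ k * √q := by
  obtain ⟨w, hw⟩ := exists_eq_neg_sum_pow hAL hA0 hA
  have hroot : ∀ i, ‖w i‖ ≤ √q := fun i => by
    refine Real.le_sqrt_of_sq_le ?_
    rw [← norm_pow]
    refine norm_le_of_norm_sum_pow_le (z := fun i => w i ^ 2) (C := C) hq ?_ i
    filter_upwards [hL, eventually_ne_atTop 0] with m hm hm0
    rw [hw _ (by lia), norm_neg] at hm
    simpa only [← pow_mul] using hm
  have hA1 : A 1 = -∑ i, w i := by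
    have h := hAL 1
    simpa [hA0, hw 1 one_ne_zero] using h
  calc ‖A 1‖ ≤ ∑ i, ‖w i‖ := by rw [hA1, norm_neg]; exact norm_sum_le _ _
    _ ≤ ∑ _i : Fin k, √q := sum_le_sum fun i _ => hroot i
    _ = k * √q := by simp

end PowerSums

section Norms

theorem norm_algebraMap_sub_gen {F K : Type*} [Field F] [CommRing K] [Algebra F K]
    (pb : PowerBasis F K) (a : F) :
    Algebra.norm F (algebraMap F K a - pb.gen) = (minpoly F pb.gen).eval a := by
  rw [Algebra.norm_eq_matrix_det pb.basis, ← charpoly_leftMulMatrix pb, Matrix.eval_charpoly,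
    map_sub, AlgHom.commutes, Matrix.algebraMap_eq_diagonal]
  rfl

theorem pow_geomSum_mul_eq_algebraMap_pow {F K : Type*} [Field F] [Finite F] [CommRing K]
    [Algebra F K] {y : K} {a : F} {d : ℕ}
    (h : y ^ ∑ t ∈ range d, Nat.card F ^ t = algebraMap F K a) (m : ℕ) :
    y ^ ∑ t ∈ range (d * m), Nat.card F ^ t = algebraMap F K (a ^ m) := by
  have := Fintype.ofFinite F
  induction m with
  | zero => simp
  | succ m ih =>
    rw [Nat.mul_succ, sum_range_add, pow_add, ih]
    simp only [pow_add, ← mul_sum]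
    rw [mul_comm (Nat.card F ^ (d * m)), pow_mul, h, ← map_pow, ← map_mul, Nat.card_eq_fintype_card,
      FiniteField.pow_card_pow, pow_one]

variable {F : Type*} [Field F] {ι : Type*} [Fintype ι]

/-- The multiplicative function `g ↦ ∏ g(w i) ^ e i` on polynomials. -/
noncomputable def evalProd (w : ι → F) (e : ι → ℕ) : F[X] →* F where
  toFun g := ∏ i, g.eval (w i) ^ e i
  map_one' := by simp
  map_mul' g h := by simp only [eval_mul, mul_pow, prod_mul_distrib]

theorem evalProd_apply (w : ι → F) (e : ι → ℕ) (g : F[X]) :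
    evalProd w e g = ∏ i, g.eval (w i) ^ e i := rfl

/-- The polynomial `∏ (w i - X) ^ e i`: its value at a root of a monic irreducible `P` has norm
`evalProd w e P`. -/
noncomputable def linearProd (w : ι → F) (e : ι → ℕ) : F[X] :=
  ∏ i, (C (w i) - X) ^ e i

theorem natDegree_linearProd (w : ι → F) (e : ι → ℕ) :
    (linearProd w e).natDegree = ∑ i, e i := by
  have hdegree : ∀ a : F, (C a - X).natDegree = 1 := fun a => by
    rw [natDegree_sub, natDegree_X_sub_C]
  have hne : ∀ a : F, C a - X ≠ 0 := fun a => ne_zero_of_natDegree_gt (n := 0) (by simp [hdegree])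
  rw [linearProd, natDegree_prod _ _ fun i _ => pow_ne_zero _ (hne _)]
  simp only [natDegree_pow, hdegree, mul_one]

theorem exists_linearProd_eq_X_mul {w : ι → F} {e : ι → ℕ} {i₀ : ι} (hw₀ : w i₀ = 0)
    (he₀ : e i₀ = 1) (hw : ∀ i, i ≠ i₀ → w i ≠ 0) :
    ∃ g : F[X], g.coeff 0 ≠ 0 ∧ linearProd w e = X * g := by
  classical
  refine ⟨-∏ i ∈ univ.erase i₀, (C (w i) - X) ^ e i, ?_, ?_⟩
  · simp only [coeff_zero_eq_eval_zero, eval_neg, eval_prod, eval_pow, eval_sub, eval_C, eval_X,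
      sub_zero]
    exact neg_ne_zero.2 (prod_ne_zero_iff.2 fun i hi => pow_ne_zero _ (hw i (ne_of_mem_erase hi)))
  · rw [linearProd, ← mul_prod_erase _ _ (mem_univ i₀), hw₀, he₀]
    simp

theorem aeval_root_linearProd_pow [Finite F] (w : ι → F) (e : ι → ℕ) {P : F[X]}
    [hP : Fact (Irreducible P)] (hmonic : P.Monic) :
    aeval (AdjoinRoot.root P) (linearProd w e) ^ ∑ t ∈ range P.natDegree, Nat.card F ^ t =
      algebraMap F (AdjoinRoot P) (evalProd w e P) := by
  let pb := AdjoinRoot.powerBasis hP.out.ne_zero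
  have hgen : pb.gen = AdjoinRoot.root P := AdjoinRoot.powerBasis_gen hP.out.ne_zero
  have := pb.finite
  have := Module.finite_of_finite F (M := AdjoinRoot P)
  have hnorm : ∀ a : F, (algebraMap F (AdjoinRoot P) a - AdjoinRoot.root P) ^
        ∑ t ∈ range P.natDegree, Nat.card F ^ t =
      algebraMap F (AdjoinRoot P) (P.eval a) := fun a => by
    have hmin : minpoly F pb.gen = P := by
      rw [hgen, AdjoinRoot.minpoly_root hP.out.ne_zero, hmonic.leadingCoeff, inv_one, C_1, mul_one]
    have hrank : Module.finrank F (AdjoinRoot P) = P.natDegree := by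
      rw [pb.finrank, AdjoinRoot.powerBasis_dim]
    rw [← hrank, ← FiniteField.algebraMap_norm_eq_pow_sum, ← hgen, norm_algebraMap_sub_gen, hmin]
  simp only [linearProd, evalProd_apply, map_prod, map_pow, map_sub, aeval_C, aeval_X, ← prod_pow,
    ← hnorm]
  exact prod_congr rfl fun i _ => pow_right_comm _ _ _

theorem root_pow_card_pow [Finite F] {P : F[X]} [hP : Fact (Irreducible P)] {n : ℕ}
    (hn : P.natDegree ∣ n) :
    AdjoinRoot.root P ^ Nat.card F ^ n = AdjoinRoot.root P := by
  obtain ⟨m, rfl⟩ := hn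
  let pb := AdjoinRoot.powerBasis hP.out.ne_zero
  have := pb.finite
  have := Module.finite_of_finite F (M := AdjoinRoot P)
  have := Fintype.ofFinite (AdjoinRoot P)
  have hcard : Nat.card F ^ P.natDegree = Fintype.card (AdjoinRoot P) := by
    rw [← Nat.card_eq_fintype_card, Module.natCard_eq_pow_finrank (K := F) (V := AdjoinRoot P),
      pb.finrank, AdjoinRoot.powerBasis_dim]
  rw [pow_mul, hcard, FiniteField.pow_card_pow]

end Norms

section Stepanov

variable {F : Type*} [Field F]

theorem exists_sum_smul_eq_zero_of_degree_lt {ι : Type*} [Fintype ι] {T : ι → F[X]} {M : ℕ}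
    (hT : ∀ x, (T x).degree < M) (hM : M < Fintype.card ι) :
    ∃ c : ι → F, c ≠ 0 ∧ ∑ x, c x • T x = 0 := by
  have hdependent : ¬ LinearIndependent F T := fun hindep => by
    have := Module.Finite.equiv (degreeLTEquiv F M).symm
    have hmem : ∀ x, T x ∈ degreeLT F M := fun x => mem_degreeLT.2 (hT x)
    have hindep' : LinearIndependent F fun x => (⟨T x, hmem x⟩ : degreeLT F M) :=
      LinearIndependent.of_comp (degreeLT F M).subtype hindep
    have hcard := hindep'.fintype_card_le_finrank
    rw [(degreeLTEquiv F M).finrank_eq, Module.finrank_fin_fun] at hcard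
    lia
  obtain ⟨c, hc, i, hi⟩ := Fintype.not_linearIndependent_iff.1 hdependent
  exact ⟨c, fun h => hi (congrFun h i), hc⟩

theorem linearIndependent_mul_X_pow {ι : Type*} {h : ι → F[X]} {v : ι → ℕ}
    (hv : Function.Injective v) (hh : ∀ x, (h x).coeff 0 ≠ 0) :
    LinearIndependent F fun x => h x * X ^ v x := by
  classical
  rw [linearIndependent_iff']
  intro s c hc
  by_contra! hne
  have hsupport : {x ∈ s | c x ≠ 0}.Nonempty := by
    obtain ⟨x, hx⟩ := hne
    exact ⟨x, mem_filter.2 hx⟩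
  -- The term with the smallest power of `X` survives in the lowest coefficient.
  obtain ⟨x₀, hx₀, hmin⟩ := exists_min_image _ v hsupport
  rw [mem_filter] at hx₀
  have hcoeff := congrArg (fun g => g.coeff (v x₀)) hc
  simp only [finsetSum_coeff, coeff_smul, coeff_zero, coeff_mul_X_pow', smul_eq_mul] at hcoeff
  rw [sum_eq_single_of_mem x₀ hx₀.1 fun x hx hxx₀ => ?_, if_pos le_rfl, Nat.sub_self] at hcoeff
  · exact mul_ne_zero hx₀.2 (hh x₀) hcoeff
  · by_cases hcx : c x = 0
    · rw [hcx, zero_mul]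
    · have hlt := (hmin x (mem_filter.2 ⟨hx, hcx⟩)).lt_of_ne fun h => hxx₀ (hv h).symm
      rw [if_neg hlt.not_ge, mul_zero]

theorem injective_digits {d J E R : ℕ} (hR : d * E ≤ R) :
    Function.Injective fun x : Fin d × Fin J × Fin E => (x.2.2 + x.2.1 * R + E * x.1 : ℕ) := by
  rintro ⟨i, j, t⟩ ⟨i', j', t'⟩ h
  have hlt : ∀ (i : Fin d) (t : Fin E), (t + E * i : ℕ) < R := fun i t => by
    nlinarith [Nat.mul_le_mul_left E i.2, t.2]
  have hj : (j : ℕ) = j' := by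
    have hdiv := congrArg (· / R) h
    simpa only [add_right_comm, Nat.add_mul_div_right _ _ ((Nat.zero_le _).trans_lt (hlt i t)),
      Nat.div_eq_of_lt (hlt _ _), zero_add] using hdiv
  have hsum : (t + E * i : ℕ) = t' + E * i' := by
    simp only [hj] at h
    lia
  have hi : (i : ℕ) = i' := by
    have hdiv := congrArg (· / E) hsum
    simpa only [Nat.add_mul_div_left _ _ t.pos, Nat.div_eq_of_lt (Fin.is_lt _), zero_add] using hdiv
  have ht : (t : ℕ) = t' := by simpa only [hi, add_left_inj] using hsum
  simp only [Prod.mk.injEq, Fin.ext_iff]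
  exact ⟨hi, hj, ht⟩

variable {d J : ℕ}

/-- Stepanov's auxiliary polynomial, which is to vanish at the points `θ` with `θ ^ R ^ 2 = θ` and
`f(θ) ^ (E * (R + 1)) = z`. The coefficients `c` are indexed by the exponents of `f ^ E`, `X ^ R`
and `X`. -/
noncomputable def stepanovAux (f : F[X]) (R : ℕ) {E : ℕ} (c : Fin d × Fin J × Fin E → F) : F[X] :=
  ∑ x, c x • (X ^ (x.2.2 + x.2.1 * R : ℕ) * f ^ (E * x.1))

/-- A polynomial of low degree which agrees with `f ^ (E * (d - 1)) * stepanovAux f R c ^ R` at the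
points where `stepanovAux f R c` is to vanish. -/
noncomputable def stepanovReduction (f : F[X]) (z : F) (R : ℕ) {E : ℕ}
    (c : Fin d × Fin J × Fin E → F) : F[X] :=
  ∑ x, c x • (C (z ^ (x.1 : ℕ)) * X ^ (x.2.2 * R + x.2.1 : ℕ) * f ^ (E * (d - 1 - x.1)))

theorem stepanovAux_ne_zero {g : F[X]} (hg : g.coeff 0 ≠ 0) {E R : ℕ} (hR : d * E ≤ R)
    {c : Fin d × Fin J × Fin E → F} (hc : c ≠ 0) : stepanovAux (X * g) R c ≠ 0 := by
  intro hzero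
  have hindep := linearIndependent_mul_X_pow (h := fun x : Fin d × Fin J × Fin E => g ^ (E * x.1))
    (injective_digits hR) fun x => by
      rw [coeff_zero_eq_eval_zero, eval_pow, ← coeff_zero_eq_eval_zero]
      exact pow_ne_zero _ hg
  refine hc (funext (Fintype.linearIndependent_iff.1 hindep c ?_))
  rw [← hzero, stepanovAux]
  exact sum_congr rfl fun x _ => by rw [mul_pow, pow_add, mul_comm, mul_assoc]

theorem natDegree_stepanovAux_le (f : F[X]) {E R : ℕ} (hR : d * E ≤ R)
    (c : Fin d × Fin J × Fin E → F) :
    (stepanovAux f R c).natDegree ≤ (J + f.natDegree) * R := by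
  refine natDegree_sum_le_of_forall_le _ _ fun ⟨i, j, t⟩ _ => (natDegree_smul_le _ _).trans ?_
  have hterm := natDegree_mul_le_of_le (natDegree_X_pow_le (R := F) (t + j * R))
    (natDegree_pow_le (p := f) (n := E * i))
  have hi : E * i * f.natDegree ≤ R * f.natDegree := Nat.mul_le_mul_right _ (by nlinarith [i.2])
  have hj : (j + 1) * R ≤ J * R := Nat.mul_le_mul_right _ j.2
  have ht : (t : ℕ) < R := by nlinarith [i.2, t.2]
  refine hterm.trans ?_
  linarith

theorem exists_stepanovReduction_eq_zero (f : F[X]) (z : F) {E R : ℕ} (hR : d * E + 1 = R)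
    (hJ : J = E + f.natDegree + 2) (hJR : J < R) :
    ∃ c : Fin d × Fin J × Fin E → F, c ≠ 0 ∧ stepanovReduction f z R c = 0 := by
  set D := f.natDegree
  refine exists_sum_smul_eq_zero_of_degree_lt (M := E * R + J + D * R) (fun ⟨i, j, t⟩ => ?_) ?_
  · refine degree_le_natDegree.trans_lt (Nat.cast_lt.2 ?_)
    have hterm := natDegree_mul_le_of_le (natDegree_C_mul_le (z ^ (i : ℕ)) (X ^ (t * R + j : ℕ)))
      (natDegree_pow_le (p := f) (n := E * (d - 1 - i)))
    rw [natDegree_X_pow] at hterm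
    have hi : E * (d - 1 - i) * D ≤ R * D := Nat.mul_le_mul_right _ <|
      (Nat.mul_le_mul_left E (by lia : d - 1 - i ≤ d)).trans (by linarith)
    have ht : (t + 1) * R ≤ E * R := Nat.mul_le_mul_right _ t.2
    refine hterm.trans_lt ?_
    linarith [j.2]
  · have hcount : d * (J * E) + J = E * R + D * R + 2 * R := by
      rw [← hR]
      linear_combination (d * E + 1) * hJ
    simp only [Fintype.card_prod, Fintype.card_fin]
    lia

theorem aeval_stepanovAux_pow [Finite F] {K : Type*} [CommRing K] [Algebra F K] {E k : ℕ}
    {f : F[X]} {z : F} {θ : K} (hθ : θ ^ Nat.card F ^ (2 * k) = θ)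
    (hfz : aeval θ f ^ (E * (Nat.card F ^ k + 1)) = algebraMap F K z)
    (c : Fin d × Fin J × Fin E → F) :
    aeval θ f ^ (E * (d - 1)) * aeval θ (stepanovAux f (Nat.card F ^ k) c) ^ Nat.card F ^ k =
      aeval θ (stepanovReduction f z (Nat.card F ^ k) c) := by
  have := Fintype.ofFinite F
  set R := Nat.card F ^ k with hR
  set φ : K →ₐ[F] K := FiniteField.frobeniusAlgHom F K ^ k
  have hφ : ∀ x, φ x = x ^ R := fun x => by
    rw [AlgHom.coe_pow, FiniteField.coe_frobeniusAlgHom, pow_iterate, hR, Nat.card_eq_fintype_card]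
  rw [two_mul, pow_add, ← hR] at hθ
  rw [← hφ, stepanovAux, stepanovReduction, map_sum, map_sum, map_sum, mul_sum]
  refine sum_congr rfl fun ⟨i, j, t⟩ _ => ?_
  simp only [map_smul, map_mul, map_pow, aeval_X, aeval_C, ← hfz, mul_smul_comm]
  have hθpow : φ θ ^ (t + j * R : ℕ) = θ ^ (t * R + j : ℕ) := by
    rw [hφ, ← pow_mul, mul_add, pow_add, pow_add, mul_comm (j : ℕ), ← mul_assoc, pow_mul θ (R * R),
      hθ, mul_comm R]
  have hi : E * (d - 1) = E * (d - 1 - i) + E * i := by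
    rw [← mul_add, Nat.sub_add_cancel (by lia)]
  rw [hθpow, hφ, hi]
  congr 1
  ring

theorem aeval_stepanovAux_eq_zero [Finite F] {K : Type*} [Field K] [Algebra F K] {E k : ℕ}
    {f : F[X]} {z : F} (hz : z ≠ 0) {θ : K} (hθ : θ ^ Nat.card F ^ (2 * k) = θ) (hE : E ≠ 0)
    (hfz : aeval θ f ^ (E * (Nat.card F ^ k + 1)) = algebraMap F K z)
    {c : Fin d × Fin J × Fin E → F} (hc : stepanovReduction f z (Nat.card F ^ k) c = 0) :
    aeval θ (stepanovAux f (Nat.card F ^ k) c) = 0 := by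
  have hf : aeval θ f ≠ 0 := fun h => by
    rw [h, zero_pow (by positivity), eq_comm, FaithfulSMul.algebraMap_eq_zero_iff] at hfz
    exact hz hfz
  have h := aeval_stepanovAux_pow hθ hfz c
  rw [hc, map_zero] at h
  exact eq_zero_of_pow_eq_zero ((mul_eq_zero.1 h).resolve_left (pow_ne_zero _ hf))

end Stepanov

section FiberDegrees

theorem sum_natDegree_le_natDegree {F : Type*} [Field F] {S : Finset F[X]} {W : F[X]} (hW : W ≠ 0)
    (hmonic : ∀ P ∈ S, P.Monic) (hirr : ∀ P ∈ S, Irreducible P) (hdvd : ∀ P ∈ S, P ∣ W) :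
    ∑ P ∈ S, P.natDegree ≤ W.natDegree := by
  refine (natDegree_prod_of_monic S id hmonic).symm.trans_le ?_
  refine natDegree_le_of_dvd (prod_dvd_of_coprime (fun P hP Q hQ hPQ => ?_) hdvd) hW
  refine (hirr P hP).coprime_iff_not_dvd.2 fun h => hPQ ?_
  exact eq_of_monic_of_associated (hmonic P hP) (hmonic Q hQ)
    ((hirr P hP).associated_of_dvd (hirr Q hQ) h)

variable {F : Type*} [Field F] [Finite F]

open scoped Classical in
/-- The von Mangoldt weight of the prime powers of degree `n` on which the multiplicative function
`ρ` takes the value `z`. -/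
noncomputable def fiberDegree (ρ : F[X] →* F) (n : ℕ) (z : F) : ℕ :=
  ∑ P ∈ monicIrreducible F n with ρ P ^ (n / P.natDegree) = z, P.natDegree

theorem vonMangoldtSum_comp [Fintype F] {R : Type*} [CommSemiring R] (χ : F →* R) (ρ : F[X] →* F)
    (n : ℕ) : vonMangoldtSum (χ.comp ρ) n = ∑ z, χ z * fiberDegree ρ n z := by
  classical
  rw [vonMangoldtSum, ← sum_fiberwise (monicIrreducible F n) fun P => ρ P ^ (n / P.natDegree)]
  refine sum_congr rfl fun z _ => ?_
  rw [fiberDegree, Nat.cast_sum, mul_sum]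
  refine sum_congr rfl fun P hP => ?_
  rw [MonoidHom.comp_apply, ← map_pow, (mem_filter.1 hP).2, mul_comm]

theorem sum_fiberDegree [Fintype F] (ρ : F[X] →* F) {n : ℕ} (hn : n ≠ 0) :
    ∑ z, fiberDegree ρ n z = Nat.card F ^ n := by
  have h := vonMangoldtSum_comp (1 : F →* ℤ) ρ n
  rw [MonoidHom.one_comp, vonMangoldtSum_one hn] at h
  simp only [MonoidHom.one_apply, one_mul] at h
  exact_mod_cast h.symm

theorem fiberDegree_le_natDegree {ρ : F[X] →* F} {n : ℕ} {z : F} {W : F[X]} (hW : W ≠ 0)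
    (h : ∀ P ∈ monicIrreducible F n, ρ P ^ (n / P.natDegree) = z → P ∣ W) :
    fiberDegree ρ n z ≤ W.natDegree := by
  classical
  exact sum_natDegree_le_natDegree hW
    (fun P hP => (mem_monicIrreducible.1 (mem_filter.1 hP).1).1)
    (fun P hP => (mem_monicIrreducible.1 (mem_filter.1 hP).1).2.1)
    fun P hP => h P (mem_filter.1 hP).1 (mem_filter.1 hP).2

variable {ι : Type*} [Fintype ι]

theorem fiberDegree_evalProd_zero_le (w : ι → F) (e : ι → ℕ) (n : ℕ) :
    fiberDegree (evalProd w e) n 0 ≤ Fintype.card ι := by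
  have hmonic : ∀ i ∈ (univ : Finset ι), (X - C (w i)).Monic := fun i _ => monic_X_sub_C _
  calc fiberDegree (evalProd w e) n 0
      ≤ (∏ i, (X - C (w i))).natDegree := by
        refine fiberDegree_le_natDegree (monic_prod_of_monic _ _ hmonic).ne_zero fun P hP hPz => ?_
        rw [evalProd_apply] at hPz
        obtain ⟨i, -, hi⟩ := prod_eq_zero_iff.1 (eq_zero_of_pow_eq_zero hPz)
        have hdvd : X - C (w i) ∣ P := dvd_iff_isRoot.2 (eq_zero_of_pow_eq_zero hi)
        have hassoc := (irreducible_X_sub_C (w i)).associated_of_dvd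
          (mem_monicIrreducible.1 hP).2.1 hdvd
        exact hassoc.symm.dvd.trans (dvd_prod_of_mem _ (mem_univ i))
    _ = Fintype.card ι := by
        rw [natDegree_prod_of_monic _ _ hmonic]
        simp

theorem fiberDegree_evalProd_le {w : ι → F} {e : ι → ℕ} {i₀ : ι} (hw₀ : w i₀ = 0) (he₀ : e i₀ = 1)
    (hw : ∀ i, i ≠ i₀ → w i ≠ 0) {k : ℕ} (hk : k ≠ 0)
    (hbig : ∑ t ∈ range k, Nat.card F ^ t + ∑ i, e i + 2 < Nat.card F ^ k) {z : F} (hz : z ≠ 0) :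
    fiberDegree (evalProd w e) (2 * k) z ≤
      (∑ t ∈ range k, Nat.card F ^ t + 2 * ∑ i, e i + 2) * Nat.card F ^ k := by
  classical
  set E := ∑ t ∈ range k, Nat.card F ^ t with hE
  obtain ⟨g, hg, hfg⟩ := exists_linearProd_eq_X_mul hw₀ he₀ hw
  have hR : (Nat.card F - 1) * E + 1 = Nat.card F ^ k := by
    have hgeom := geom_sum_mul_add (Nat.card F - 1) k
    rwa [Nat.sub_one_add_one Nat.card_pos.ne', mul_comm] at hgeom
  obtain ⟨c, hc, hred⟩ := exists_stepanovReduction_eq_zero (linearProd w e) z hR rfl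
    (by rwa [natDegree_linearProd])
  have hdE := (Nat.le_succ _).trans hR.le
  have hne := stepanovAux_ne_zero hg hdE hc
  rw [← hfg] at hne
  refine (fiberDegree_le_natDegree hne fun P hP hPz => ?_).trans
    ((natDegree_stepanovAux_le _ hdE c).trans_eq ?_)
  · obtain ⟨hmonic, hirr, hdvd, -⟩ := mem_monicIrreducible.1 hP
    have := Fact.mk hirr
    rw [← AdjoinRoot.mk_eq_zero, ← AdjoinRoot.aeval_eq]
    refine aeval_stepanovAux_eq_zero hz (root_pow_card_pow hdvd) ?_ ?_ hred
    · exact (sum_pos (fun t _ => pow_pos Nat.card_pos t) (nonempty_range_iff.2 hk)).ne'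
    · have hpow := pow_geomSum_mul_eq_algebraMap_pow (aeval_root_linearProd_pow w e hmonic)
        (2 * k / P.natDegree)
      rw [Nat.mul_div_cancel' hdvd, hPz, two_mul, sum_range_add] at hpow
      simp only [pow_add, ← mul_sum] at hpow
      rw [← hpow, hE]
      ring
  · rw [natDegree_linearProd]
    ring

end FiberDegrees

section WeilBound

theorem norm_mulChar_le_one {R : Type*} [CommRing R] [Finite Rˣ] (χ : MulChar R ℂ) (a : R) :
    ‖χ a‖ ≤ 1 := by
  by_cases ha : IsUnit a
  · obtain ⟨u, rfl⟩ := ha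
    have := Fintype.ofFinite Rˣ
    exact (Complex.norm_eq_one_of_mem_rootsOfUnity (χ.apply_mem_rootsOfUnity u)).le
  · simp [χ.map_nonunit ha]

theorem geomSum_add_lt_pow {q D k : ℕ} (hq : 2 < q) (hk : 2 * D + 4 ≤ k) :
    ∑ t ∈ range k, q ^ t + D + 2 < q ^ k := by
  have hkq : k < q ^ k := Nat.lt_pow_self (by lia)
  have hgeom := geom_sum_mul_add (q - 1) k
  rw [Nat.sub_one_add_one (by lia)] at hgeom
  have hdouble := Nat.mul_le_mul_left (∑ t ∈ range k, q ^ t) (by lia : 2 ≤ q - 1)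
  lia

variable {F : Type*} [Field F] {χ : MulChar F ℂ}

theorem two_lt_card_of_mulChar_ne_one [Finite F] (hχ : χ ≠ 1) : 2 < Nat.card F := by
  contrapose! hχ
  have hunits : Nat.card Fˣ ≤ 1 := by
    have := Nat.card_units F
    lia
  have := Finite.card_le_one_iff_subsingleton.1 hunits
  exact MulChar.ext fun u => by rw [Subsingleton.elim u 1, Units.val_one, map_one, map_one]

open scoped Classical in
theorem norm_sum_mulChar_mul_le [Fintype F] (hχ : χ ≠ 1) {N : F → ℝ} {U : ℝ}
    (hN : ∀ z, z ≠ 0 → N z ≤ U) :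
    ‖∑ z, χ z * N z‖ ≤ ∑ z ∈ univ.erase 0, (U - N z) := by
  have hshift : ∑ z, χ z * N z = -∑ z ∈ univ.erase 0, χ z * (U - N z : ℝ) := by
    rw [sum_erase _ (by rw [MulChar.map_zero, zero_mul])]
    simp only [Complex.ofReal_sub, mul_sub, sum_sub_distrib, ← sum_mul,
      MulChar.sum_eq_zero_of_ne_one hχ, zero_mul, zero_sub, neg_neg]
  rw [hshift, norm_neg]
  refine norm_sum_le_of_le _ fun z hz => ?_
  have hUN := sub_nonneg.2 (hN z (ne_of_mem_erase hz))
  rw [norm_mul, Complex.norm_of_nonneg hUN]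
  exact mul_le_of_le_one_left hUN (norm_mulChar_le_one χ z)

variable {ι : Type*} [Fintype ι] {w : ι → F} {e : ι → ℕ} {i₀ : ι}

theorem norm_vonMangoldtSum_le [Finite F] (hχ : χ ≠ 1) (hw₀ : w i₀ = 0) (he₀ : e i₀ = 1)
    (hw : ∀ i, i ≠ i₀ → w i ≠ 0) {k : ℕ} (hk : 2 * ∑ i, e i + 4 ≤ k) :
    ‖vonMangoldtSum (χ.toMonoidHom.comp (evalProd w e)) (2 * k)‖ ≤
      ((Nat.card F - 1) * (2 * ∑ i, e i + 2) + Fintype.card ι : ℝ) * (Nat.card F : ℝ) ^ k := by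
  classical
  have := Fintype.ofFinite F
  set q := Nat.card F
  set D := ∑ i, e i
  set E := ∑ t ∈ range k, q ^ t with hE
  have hq2 : 2 < q := two_lt_card_of_mulChar_ne_one hχ
  have hgeom : (E : ℝ) * (q - 1) = q ^ k - 1 := by
    rw [hE]
    push_cast
    exact geom_sum_mul _ _
  have hU : ∀ z : F, z ≠ 0 →
      (fiberDegree (evalProd w e) (2 * k) z : ℝ) ≤ (E + 2 * D + 2) * q ^ k := fun z hz => by
    exact_mod_cast fiberDegree_evalProd_le hw₀ he₀ hw (by lia)
      (geomSum_add_lt_pow hq2 hk) hz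
  have htotal : ∑ z ∈ univ.erase 0, (fiberDegree (evalProd w e) (2 * k) z : ℝ) =
      (q : ℝ) ^ k * q ^ k - fiberDegree (evalProd w e) (2 * k) 0 := by
    have := sum_fiberDegree (evalProd w e) (n := 2 * k) (by lia)
    rw [eq_sub_iff_add_eq, sum_erase_add _ _ (mem_univ 0), ← pow_add, ← two_mul]
    exact_mod_cast this
  have hzero : (fiberDegree (evalProd w e) (2 * k) 0 : ℝ) ≤ Fintype.card ι * (q : ℝ) ^ k := by
    have hle : fiberDegree (evalProd w e) (2 * k) 0 ≤ Fintype.card ι * q ^ k :=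
      (fiberDegree_evalProd_zero_le w e (2 * k)).trans
        (Nat.le_mul_of_pos_right _ (pow_pos (by lia) k))
    exact_mod_cast hle
  calc ‖vonMangoldtSum (χ.toMonoidHom.comp (evalProd w e)) (2 * k)‖
      = ‖∑ z, χ z * (fiberDegree (evalProd w e) (2 * k) z : ℝ)‖ := by
        rw [vonMangoldtSum_comp]
        rfl
    _ ≤ ∑ z ∈ univ.erase 0,
          ((E + 2 * D + 2) * q ^ k - fiberDegree (evalProd w e) (2 * k) z : ℝ) :=
        norm_sum_mulChar_mul_le hχ hU
    _ = (q - 1) * ((E + 2 * D + 2) * q ^ k) -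
          (q ^ k * q ^ k - fiberDegree (evalProd w e) (2 * k) 0) := by
        rw [sum_sub_distrib, htotal, sum_const, card_erase_of_mem (mem_univ _), card_univ,
          ← Nat.card_eq_fintype_card, nsmul_eq_mul, Nat.cast_sub (by lia), Nat.cast_one]
    _ ≤ _ := by linear_combination hzero + q ^ k * hgeom + pow_nonneg (Nat.cast_nonneg (α := ℝ) q) k

theorem sum_monicOfDegree_add [Finite F] {h : F[X]} {n : ℕ} (hh : h.natDegree < n) (f : F[X] → ℂ) :
    ∑ g ∈ monicOfDegree F n, f (g + h) = ∑ g ∈ monicOfDegree F n, f g := by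
  refine sum_bij' (fun g _ => g + h) (fun g _ => g - h) (fun g hg => ?_) (fun g hg => ?_)
    (fun g _ => add_sub_cancel_right g h) (fun g _ => sub_add_cancel g h) fun _ _ => rfl <;>
    rw [mem_monicOfDegree] at hg ⊢
  · exact hg.add_right hh
  · exact hg.sub hh

theorem sum_mulChar_add_mul [Fintype F] (hχ : χ ≠ 1) (a : F) {b : F} (hb : b ≠ 0) :
    ∑ c, χ (a + c * b) = 0 := by
  rw [← MulChar.sum_eq_zero_of_ne_one hχ]
  exact ((Equiv.mulRight₀ b hb).trans (Equiv.addLeft a)).sum_comp χ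

theorem monicSum_comp_evalProd_eq_zero [Finite F] (hχ : χ ≠ 1) (he₀ : e i₀ = 1)
    (hw : ∀ i, i ≠ i₀ → w i ≠ w i₀) {n : ℕ} (hn : Fintype.card ι ≤ n) :
    monicSum (χ.toMonoidHom.comp (evalProd w e)) n = 0 := by
  classical
  have := Fintype.ofFinite F
  -- Adding multiples of `b` to `g` changes `g (w i₀)` but no other value `g (w i)`.
  set b : F[X] := ∏ i ∈ univ.erase i₀, (X - C (w i)) with hb
  have hb_root : ∀ i ∈ univ.erase i₀, b.eval (w i) = 0 := fun i hi => by
    rw [hb, eval_prod]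
    exact prod_eq_zero hi (by simp)
  have hb_ne : b.eval (w i₀) ≠ 0 := by
    rw [hb, eval_prod, prod_ne_zero_iff]
    exact fun i hi => by simpa [sub_eq_zero] using (hw i (ne_of_mem_erase hi)).symm
  have hb_degree : ∀ c : F, (C c * b).natDegree < n := fun c => by
    refine (natDegree_C_mul_le c b).trans_lt ?_
    rw [hb, natDegree_prod_of_monic _ _ fun i _ => monic_X_sub_C (w i)]
    simp only [natDegree_X_sub_C, sum_const, smul_eq_mul, mul_one]
    exact (card_erase_lt_of_mem (mem_univ i₀)).trans_le hn
  have hshift : ∀ (g : F[X]) (c : F), χ (evalProd w e (g + C c * b)) =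
      χ (g.eval (w i₀) + c * b.eval (w i₀)) * ∏ i ∈ univ.erase i₀, χ (g.eval (w i)) ^ e i :=
    fun g c => by
      rw [evalProd_apply, ← mul_prod_erase _ _ (mem_univ i₀), he₀, pow_one, map_mul, map_prod]
      simp only [eval_add, eval_mul, eval_C, map_pow]
      congr 1
      exact prod_congr rfl fun i hi => by rw [hb_root i hi, mul_zero, add_zero]
  have hsum : ∑ c : F, ∑ g ∈ monicOfDegree F n, χ (evalProd w e (g + C c * b)) = 0 := by
    rw [sum_comm]
    simp only [hshift, ← sum_mul, sum_mulChar_add_mul hχ _ hb_ne, zero_mul, sum_const_zero]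
  rw [sum_congr rfl fun c _ => sum_monicOfDegree_add (hb_degree c) fun g => χ (evalProd w e g),
    sum_const, card_univ] at hsum
  exact (smul_eq_zero.1 hsum).resolve_left Fintype.card_ne_zero

theorem monicSum_comp_evalProd_one [Fintype F] (χ : MulChar F ℂ) (w : ι → F) (e : ι → ℕ) :
    monicSum (χ.toMonoidHom.comp (evalProd w e)) 1 = ∑ x, ∏ i, χ (x + w i) ^ e i := by
  symm
  refine sum_bij (fun x _ => X + C x)
    (fun x _ => mem_monicOfDegree.2 (isMonicOfDegree_X_add_one x))
    (fun x _ y _ hxy => C_injective (add_left_cancel hxy)) (fun g hg => ?_) fun x _ => ?_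
  · obtain ⟨x, rfl⟩ := isMonicOfDegree_one_iff.1 (mem_monicOfDegree.1 hg)
    exact ⟨x, mem_univ x, rfl⟩
  · change _ = χ (evalProd w e (X + C x))
    simp only [evalProd_apply, eval_add, eval_X, eval_C, map_prod, map_pow, add_comm]

theorem norm_sum_prod_mulChar_pow_le [Fintype F] (hχ : χ ≠ 1) (he₀ : e i₀ = 1)
    (hw : ∀ i, i ≠ i₀ → w i ≠ w i₀) :
    ‖∑ x, ∏ i, χ (x + w i) ^ e i‖ ≤ (Fintype.card ι - 1 : ℕ) * √(Nat.card F) := by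
  wlog hw₀ : w i₀ = 0 generalizing w
  · have h := this (w := fun i => w i - w i₀) (fun i hi => by simpa [sub_eq_zero] using hw i hi)
      (sub_self _)
    rw [← Equiv.sum_comp (Equiv.addRight (w i₀))] at h
    simpa only [Equiv.coe_addRight, add_assoc, add_sub_cancel] using h
  rw [← monicSum_comp_evalProd_one]
  refine norm_le_mul_sqrt_of_newtonRecursion (newtonRecursion_monicSum _) (monicSum_zero _)
    (fun n hn => monicSum_comp_evalProd_eq_zero hχ he₀ hw (by lia)) (Nat.cast_nonneg _)
    (Filter.eventually_atTop.2 ⟨2 * ∑ i, e i + 4, fun k hk =>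
      norm_vonMangoldtSum_le hχ hw₀ he₀ (fun i hi => hw₀ ▸ hw i hi) hk⟩)

theorem norm_sum_prod_mulChar_le [Fintype F] {ψ : ι → MulChar F ℂ} (hψ₀ : ψ i₀ ≠ 1)
    (hψ : ∀ i, ψ i ∈ Subgroup.zpowers (ψ i₀)) (hw : ∀ i, i ≠ i₀ → w i ≠ w i₀) :
    ‖∑ x, ∏ i, ψ i (x + w i)‖ ≤ (Fintype.card ι - 1 : ℕ) * √(Nat.card F) := by
  classical
  -- `χ ^ n` as a character agrees with the power of the value at `0` only for `n ≠ 0`.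
  have hpow : ∀ i, ∃ n, n ≠ 0 ∧ ψ i₀ ^ n = ψ i := fun i => by
    have hord := (ψ i₀).orderOf_pos
    obtain ⟨n, hn⟩ := (orderOf_pos_iff.1 hord).mem_powers_iff_mem_zpowers.2 (hψ i)
    exact ⟨n + orderOf (ψ i₀), by lia, by rw [pow_add, pow_orderOf_eq_one, mul_one]; exact hn⟩
  choose e he_ne he using hpow
  have hvalue : ∀ i x, ψ i x = ψ i₀ x ^ Function.update e i₀ 1 i := fun i x => by
    obtain rfl | hi := eq_or_ne i i₀
    · rw [Function.update_self, pow_one]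
    · rw [Function.update_of_ne hi, ← MulChar.pow_apply' _ (he_ne i), he]
  rw [sum_congr rfl fun x _ => prod_congr rfl fun i _ => hvalue i (x + w i)]
  exact norm_sum_prod_mulChar_pow_le hψ₀ (Function.update_self ..) hw

end WeilBound

end FunctionField

section Moment

theorem two_mul_sub_one_le_pow (r : ℕ) : 2 * r - 1 ≤ r ^ (2 * r) := by
  obtain rfl | hr := r.eq_zero_or_pos
  · simp
  calc 2 * r - 1 ≤ r ^ 2 := by
        zify [show 1 ≤ 2 * r by omega]
        nlinarith [sq_nonneg ((r : ℤ) - 1)]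
    _ ≤ r ^ (2 * r) := Nat.pow_le_pow_right hr (by omega)

theorem norm_sum_pow_two_mul {α : Type*} (s : Finset α) (f : α → ℂ) (r : ℕ) :
    ((‖∑ n ∈ s, f n‖ ^ (2 * r) : ℝ) : ℂ) =
      ∑ w ∈ Fintype.piFinset fun _ : Fin r ⊕ Fin r => s,
        (∏ i, f (w (.inl i))) * ∏ i, star (f (w (.inr i))) := by
  have hexpand := prod_univ_sum (fun _ : Fin r ⊕ Fin r => s)
    (Sum.elim (fun _ => f) fun _ n => star (f n))
  simp only [Fintype.prod_sum_type, Sum.elim_inl, Sum.elim_inr] at hexpand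
  rw [← hexpand, ← star_sum, prod_const, prod_const, card_univ, Fintype.card_fin, ← mul_pow,
    Complex.star_def, Complex.mul_conj', Complex.ofReal_pow, pow_mul]

theorem norm_prod_mul_prod_star_le {α : Type*} {r : ℕ} {s : Finset α} {β : α → ℂ} {B : ℝ}
    (hβ : ∀ n ∈ s, ‖β n‖ ≤ B) {w : Fin r ⊕ Fin r → α} (hw : ∀ i, w i ∈ s) :
    ‖(∏ i, β (w (.inl i))) * ∏ i, star (β (w (.inr i)))‖ ≤ B ^ (2 * r) := by
  calc ‖(∏ i, β (w (.inl i))) * ∏ i, star (β (w (.inr i)))‖ = ∏ i, ‖β (w i)‖ := by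
        simp only [norm_mul, norm_prod, norm_star, Fintype.prod_sum_type]
    _ ≤ ∏ _i : Fin r ⊕ Fin r, B :=
        prod_le_prod (fun i _ => norm_nonneg _) fun i _ => hβ _ (hw i)
    _ = B ^ (2 * r) := by simp [two_mul]

variable {ι α : Type*} [Fintype ι] [DecidableEq α]

theorem two_mul_card_image_le {w : ι → α} (hw : ∀ i, ∃ j, j ≠ i ∧ w j = w i) :
    2 * #(univ.image w) ≤ Fintype.card ι := by
  refine (mul_card_image_le_card _ _ fun a ha => ?_).trans_eq card_univ
  obtain ⟨i, -, rfl⟩ := mem_image.1 ha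
  obtain ⟨j, hj, hji⟩ := hw i
  exact one_lt_card.2 ⟨i, by simp, j, by simp [hji], hj.symm⟩

theorem exists_comp_eq_of_card_image_le [Nonempty ι] {w : ι → α} {r : ℕ}
    (hr : #(univ.image w) ≤ r) :
    ∃ (u : ι → Fin r) (v : Fin r → α), (∀ j, v j ∈ univ.image w) ∧ v ∘ u = w := by
  have hcard : Fintype.card (univ.image w) ≤ Fintype.card (Fin r) := by
    rwa [Fintype.card_coe, Fintype.card_fin]
  obtain ⟨emb⟩ := Function.Embedding.nonempty_of_card_le hcard
  have hmem : ∀ i, w i ∈ univ.image w := fun i => mem_image_of_mem w (mem_univ i)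
  have : Nonempty (univ.image w) := ⟨⟨_, hmem (Classical.arbitrary ι)⟩⟩
  refine ⟨fun i => emb ⟨w i, hmem i⟩, fun j => (Function.invFun emb j).1, fun j => Subtype.prop _,
    funext fun i => ?_⟩
  rw [Function.comp_apply, Function.leftInverse_invFun emb.injective]

theorem card_piFinset_filter_le [DecidableEq ι] [Nonempty ι] (s : Finset α) {r : ℕ}
    (hr : Fintype.card ι ≤ 2 * r) :
    #{w ∈ Fintype.piFinset fun _ : ι => s | ∀ i, ∃ j, j ≠ i ∧ w j = w i} ≤
      r ^ Fintype.card ι * #s ^ r := by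
  calc #{w ∈ Fintype.piFinset fun _ : ι => s | ∀ i, ∃ j, j ≠ i ∧ w j = w i}
      ≤ #(((univ : Finset (ι → Fin r)) ×ˢ Fintype.piFinset fun _ : Fin r => s).image
          fun x => x.2 ∘ x.1) := by
        refine card_le_card fun w hw => ?_
        obtain ⟨hws, hw⟩ := mem_filter.1 hw
        obtain ⟨u, v, hv, huv⟩ := exists_comp_eq_of_card_image_le (r := r) <| by
          linarith [two_mul_card_image_le hw]
        refine mem_image.2 ⟨(u, v), ?_, huv⟩
        refine mem_product.2 ⟨mem_univ u, Fintype.mem_piFinset.2 fun j => ?_⟩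
        obtain ⟨i, -, hi⟩ := mem_image.1 (hv j)
        simpa only [← hi] using Fintype.mem_piFinset.1 hws i
    _ ≤ r ^ Fintype.card ι * #s ^ r := card_image_le.trans_eq <| by simp

variable {F : Type*} [Field F] [Fintype F] {χ : MulChar F ℂ} {r : ℕ}

/-- The correlation sum of `χ` with its conjugate along the shifts `w`: the `2 * r`-th moment of a
sum of translates of `χ` is a combination of these. -/
noncomputable def charCorrelation (χ : MulChar F ℂ) (w : Fin r ⊕ Fin r → F) : ℂ :=
  ∑ x, (∏ i, χ (x + w (.inl i))) * ∏ i, χ⁻¹ (x + w (.inr i))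

theorem charCorrelation_eq_sum_prod (χ : MulChar F ℂ) (w : Fin r ⊕ Fin r → F) :
    charCorrelation χ w =
      ∑ x, ∏ i, Sum.elim (fun _ : Fin r => χ) (fun _ : Fin r => χ⁻¹) i (x + w i) := by
  simp only [charCorrelation, Fintype.prod_sum_type, Sum.elim_inl, Sum.elim_inr]

theorem norm_charCorrelation_le_card (χ : MulChar F ℂ) (w : Fin r ⊕ Fin r → F) :
    ‖charCorrelation χ w‖ ≤ Nat.card F := by
  calc ‖charCorrelation χ w‖ ≤ ∑ _x : F, (1 : ℝ) := by
        rw [charCorrelation_eq_sum_prod]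
        refine norm_sum_le_of_le _ fun x _ => ?_
        rw [norm_prod]
        exact prod_le_one (fun i _ => norm_nonneg _) fun i _ => norm_mulChar_le_one _ _
    _ = Nat.card F := by simp

theorem norm_charCorrelation_le (hχ : χ ≠ 1) {w : Fin r ⊕ Fin r → F} {i₀ : Fin r ⊕ Fin r}
    (hw : ∀ i, i ≠ i₀ → w i ≠ w i₀) :
    ‖charCorrelation χ w‖ ≤ (2 * r - 1 : ℕ) * √(Nat.card F) := by
  have hcard : Fintype.card (Fin r ⊕ Fin r) = 2 * r := by simp [two_mul]
  rw [charCorrelation_eq_sum_prod, ← hcard]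
  refine norm_sum_prod_mulChar_le ?_ (fun i => ?_) hw
  · cases i₀ <;> simpa using hχ
  · cases i₀ <;> cases i <;> simp

theorem sum_norm_pow_two_mul_eq (χ : MulChar F ℂ) (s : Finset F) (β : F → ℂ) (r : ℕ) :
    ((∑ x, ‖∑ n ∈ s, β n * χ (x + n)‖ ^ (2 * r) : ℝ) : ℂ) =
      ∑ w ∈ Fintype.piFinset fun _ : Fin r ⊕ Fin r => s,
        (∏ i, β (w (.inl i))) * (∏ i, star (β (w (.inr i)))) * charCorrelation χ w := by
  simp only [Complex.ofReal_sum, norm_sum_pow_two_mul, charCorrelation, mul_sum]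
  rw [sum_comm]
  refine sum_congr rfl fun w _ => sum_congr rfl fun x _ => ?_
  simp only [star_mul', MulChar.star_apply', prod_mul_distrib]
  ring

theorem sum_norm_pow_two_mul_le_mul_sum {s : Finset F} {β : F → ℂ} {B : ℝ}
    (hβ : ∀ n ∈ s, ‖β n‖ ≤ B) (χ : MulChar F ℂ) (r : ℕ) :
    ∑ x, ‖∑ n ∈ s, β n * χ (x + n)‖ ^ (2 * r) ≤
      B ^ (2 * r) *
        ∑ w ∈ Fintype.piFinset fun _ : Fin r ⊕ Fin r => s, ‖charCorrelation χ w‖ := by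
  calc ∑ x, ‖∑ n ∈ s, β n * χ (x + n)‖ ^ (2 * r)
      = ‖((∑ x, ‖∑ n ∈ s, β n * χ (x + n)‖ ^ (2 * r) : ℝ) : ℂ)‖ :=
        (Complex.norm_of_nonneg (by positivity)).symm
    _ ≤ _ := by
        rw [sum_norm_pow_two_mul_eq, mul_sum]
        refine norm_sum_le_of_le _ fun w hw => ?_
        rw [norm_mul]
        gcongr
        exact norm_prod_mul_prod_star_le hβ (Fintype.mem_piFinset.1 hw)

theorem sum_norm_charCorrelation_le (hχ : χ ≠ 1) (hr : r ≠ 0) (s : Finset F) :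
    ∑ w ∈ Fintype.piFinset fun _ : Fin r ⊕ Fin r => s, ‖charCorrelation χ w‖ ≤
      r ^ (2 * r) * #s ^ r * Nat.card F + #s ^ (2 * r) * ((2 * r - 1 : ℕ) * √(Nat.card F)) := by
  classical
  have := NeZero.mk hr
  have hcard : Fintype.card (Fin r ⊕ Fin r) = 2 * r := by simp [two_mul]
  set T := Fintype.piFinset fun _ : Fin r ⊕ Fin r => s
  have hT : #T = #s ^ (2 * r) := by rw [Fintype.card_piFinset, prod_const, card_univ, hcard]
  let Repeats (w : Fin r ⊕ Fin r → F) : Prop := ∀ i, ∃ j, j ≠ i ∧ w j = w i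
  have hrepeats : (#{w ∈ T | Repeats w} : ℝ) ≤ r ^ (2 * r) * #s ^ r := by
    exact_mod_cast hcard ▸ card_piFinset_filter_le s hcard.le
  have hother : (#{w ∈ T | ¬Repeats w} : ℝ) ≤ #s ^ (2 * r) := by
    exact_mod_cast hT ▸ card_filter_le T _
  rw [← sum_filter_add_sum_filter_not T Repeats]
  refine add_le_add ?_ ?_
  · refine (sum_le_card_nsmul _ _ _ fun w _ => norm_charCorrelation_le_card χ w).trans ?_
    rw [nsmul_eq_mul]
    gcongr
  · refine (sum_le_card_nsmul _ _ ((2 * r - 1 : ℕ) * √(Nat.card F)) fun w hw => ?_).trans ?_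
    · have hw := (mem_filter.1 hw).2
      simp only [Repeats] at hw
      push Not at hw
      exact norm_charCorrelation_le hχ hw.choose_spec
    · rw [nsmul_eq_mul]
      gcongr

theorem sum_norm_pow_two_mul_le (hχ : χ ≠ 1) (hr : r ≠ 0) {s : Finset F} {β : F → ℂ} {B : ℝ}
    (hB : 0 ≤ B) (hβ : ∀ n ∈ s, ‖β n‖ ≤ B) :
    ∑ x, ‖∑ n ∈ s, β n * χ (x + n)‖ ^ (2 * r) ≤
      (r * B * (#s * (Nat.card F : ℝ) ^ (1 / (4 * r) : ℝ) +
        (#s : ℝ) ^ (1 / 2 : ℝ) * (Nat.card F : ℝ) ^ (1 / (2 * r) : ℝ))) ^ (2 * r) := by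
  set q := (Nat.card F : ℝ)
  have hq : 0 ≤ q := Nat.cast_nonneg _
  have hX : (#s * q ^ (1 / (4 * r) : ℝ)) ^ (2 * r) = #s ^ (2 * r) * √q := by
    rw [mul_pow, ← Real.rpow_mul_natCast hq, Real.sqrt_eq_rpow]
    congr 2
    push_cast
    field_simp
    norm_num
  have hY : ((#s : ℝ) ^ (1 / 2 : ℝ) * q ^ (1 / (2 * r) : ℝ)) ^ (2 * r) = #s ^ r * q := by
    rw [mul_pow, ← Real.sqrt_eq_rpow, pow_mul √_, Real.sq_sqrt (Nat.cast_nonneg _)]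
    congr 1
    simpa using Real.rpow_inv_natCast_pow (n := 2 * r) hq (by omega)
  have hcoeff : ((2 * r - 1 : ℕ) : ℝ) ≤ r ^ (2 * r) := by
    exact_mod_cast two_mul_sub_one_le_pow r
  calc ∑ x, ‖∑ n ∈ s, β n * χ (x + n)‖ ^ (2 * r)
      ≤ B ^ (2 * r) * (r ^ (2 * r) * #s ^ r * q + #s ^ (2 * r) * ((2 * r - 1 : ℕ) * √q)) :=
        (sum_norm_pow_two_mul_le_mul_sum hβ χ r).trans <| by
          gcongr
          exact sum_norm_charCorrelation_le hχ hr s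
    _ ≤ B ^ (2 * r) * (r ^ (2 * r) * #s ^ r * q + #s ^ (2 * r) * (r ^ (2 * r) * √q)) := by
        gcongr
    _ = (r * B) ^ (2 * r) * ((#s * q ^ (1 / (4 * r) : ℝ)) ^ (2 * r) +
          ((#s : ℝ) ^ (1 / 2 : ℝ) * q ^ (1 / (2 * r) : ℝ)) ^ (2 * r)) := by
        rw [hX, hY]
        ring
    _ ≤ _ := by
        rw [mul_pow (r * B : ℝ)]
        gcongr
        exact pow_add_pow_le (by positivity) (by positivity) (by omega)

end Moment

section Holder

theorem sum_mul_le_of_sum_pow_two_mul_le {ι : Type*} {s : Finset ι} {a T : ι → ℝ} {r : ℕ} {Z : ℝ}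
    (hr : r ≠ 0) (ha : ∀ i, 0 ≤ a i) (hT : ∀ i, 0 ≤ T i) (hZ : 0 ≤ Z)
    (hTZ : ∑ i ∈ s, T i ^ (2 * r) ≤ Z ^ (2 * r)) :
    ∑ i ∈ s, a i * T i ≤
      (∑ i ∈ s, a i) ^ (1 - 1 / r : ℝ) *
        ((∑ i ∈ s, a i ^ 2) ^ (1 / 2 : ℝ)) ^ (1 / r : ℝ) * Z := by
  have hr1 : (1 : ℝ) ≤ r := by exact_mod_cast Nat.one_le_iff_ne_zero.2 hr
  have hA : 0 ≤ ∑ i ∈ s, a i := sum_nonneg fun i _ => ha i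
  have hcauchy : ∑ i ∈ s, a i * T i ^ r ≤ (∑ i ∈ s, a i ^ 2) ^ (1 / 2 : ℝ) * Z ^ r := by
    refine (Real.sum_mul_le_sqrt_mul_sqrt s a fun i => T i ^ r).trans ?_
    rw [← Real.sqrt_eq_rpow]
    gcongr
    refine Real.sqrt_le_iff.2 ⟨by positivity, ?_⟩
    simpa only [← pow_mul, mul_comm r 2] using hTZ
  have hholder := Real.inner_le_weight_mul_Lp_of_nonneg s hr1 a T ha hT
  simp only [Real.rpow_natCast, ← one_div] at hholder
  calc ∑ i ∈ s, a i * T i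
      ≤ (∑ i ∈ s, a i) ^ (1 - 1 / r : ℝ) * (∑ i ∈ s, a i * T i ^ r) ^ (1 / r : ℝ) := hholder
    _ ≤ (∑ i ∈ s, a i) ^ (1 - 1 / r : ℝ) *
          ((∑ i ∈ s, a i ^ 2) ^ (1 / 2 : ℝ) * Z ^ r) ^ (1 / r : ℝ) := by
        gcongr
        exact sum_nonneg fun i _ => mul_nonneg (ha i) (pow_nonneg (hT i) r)
    _ = _ := by
        rw [Real.mul_rpow (by positivity) (by positivity), one_div (r : ℝ),
          Real.pow_rpow_inv_natCast hZ hr, mul_assoc]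

end Holder

theorem karatsuba_bilinear_general {F : Type*} [Field F] [Finite F] {χ : MulChar F ℂ}
    (hχ : χ ≠ 1) {r : ℕ} (hr : r ≠ 0) (s t : Finset F) (α : F → ℂ) {β : F → ℂ} {B : ℝ}
    (hB : 0 ≤ B) (hβ : ∀ n ∈ t, ‖β n‖ ≤ B) :
    ‖∑ m ∈ s, ∑ n ∈ t, α m * β n * χ (m + n)‖ ≤
      r * (∑ m ∈ s, ‖α m‖) ^ (1 - 1 / r : ℝ) *
        ((∑ m ∈ s, ‖α m‖ ^ 2) ^ (1 / 2 : ℝ)) ^ (1 / r : ℝ) * B *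
        (#t * (Nat.card F : ℝ) ^ (1 / (4 * r) : ℝ) +
          (#t : ℝ) ^ (1 / 2 : ℝ) * (Nat.card F : ℝ) ^ (1 / (2 * r) : ℝ)) := by
  have := Fintype.ofFinite F
  have hmoment := (sum_le_univ_sum_of_nonneg (s := s) fun x => by positivity).trans
    (sum_norm_pow_two_mul_le hχ hr hB hβ)
  calc ‖∑ m ∈ s, ∑ n ∈ t, α m * β n * χ (m + n)‖
      ≤ ∑ m ∈ s, ‖α m‖ * ‖∑ n ∈ t, β n * χ (m + n)‖ := by
        refine norm_sum_le_of_le _ fun m _ => ?_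
        simp only [mul_assoc, ← mul_sum, norm_mul, le_refl]
    _ ≤ _ := sum_mul_le_of_sum_pow_two_mul_le hr (fun _ => norm_nonneg _)
        (fun _ => norm_nonneg _) (by positivity) hmoment
    _ = _ := by ring

/-- Theorem A.1 (Karatsuba's bound for double character sums, explicit form). -/
theorem karatsuba_bilinear (r : ℕ) (hr : 0 < r) :
    ∃ C : ℝ, 0 < C ∧ ∀ (p : ℕ), p.Prime →
      ∀ (χ : MulChar (ZMod p) ℂ), χ ≠ 1 →
      ∀ (ℳ 𝒩 : Finset (ZMod p)) (α β : ZMod p → ℂ) (Bβ : ℝ), 0 ≤ Bβ →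
        (∀ n ∈ 𝒩, ‖β n‖ ≤ Bβ) →
      ‖∑ m ∈ ℳ, ∑ n ∈ 𝒩, α m * β n * χ (m + n)‖ ≤
        C * (∑ m ∈ ℳ, ‖α m‖) ^ (1 - 1 / (r : ℝ) : ℝ) *
          ((∑ m ∈ ℳ, ‖α m‖ ^ 2) ^ ((1 : ℝ) / 2)) ^ ((1 : ℝ) / (r : ℝ)) * Bβ *
          ((𝒩.card : ℝ) * (p : ℝ) ^ ((1 : ℝ) / (4 * (r : ℝ))) +
            (𝒩.card : ℝ) ^ ((1 : ℝ) / 2) * (p : ℝ) ^ ((1 : ℝ) / (2 * (r : ℝ)))) := by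
  refine ⟨r, Nat.cast_pos.2 hr, fun p hp χ hχ ℳ 𝒩 α β Bβ hB hβ => ?_⟩
  have := Fact.mk hp
  simpa only [Nat.card_zmod] using karatsuba_bilinear_general hχ hr.ne' ℳ 𝒩 α hB hβ
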